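/- arXiv:cs/0703029 — 2 statements merged into one kernel-verified Lean document; each statement's English description precedes it below -/
import Mathlib

section
/- Let A = (a_{ij}) ∈ ℝ^{N×N} be a nonzero skew-symmetric matrix and t ≥ 0. With log Φ̃(t,A) := E log det(√t I_N + Y_A), where Y_A is built from i.i.d. standard Gaussians, one has log Φ(t,A) ≤ log Φ̃(t,A) + (N−1) C₁, where Φ(t,A) is the weighted matching polynomial (times √t if N is odd) and C₁ := −(1/√(2π)) ∫_ℝ log(x²) e^{−x²/2} dx. -/
/-!
Write `s = √t` and let `D_S` be the principal minor of `s • 1 + Y_A` on the index set `S`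
(`minorD`).

For an index `i` below all of `S`, the Schur complement gives `D_{S ∪ {i}} = s D_S + u · adj · u`
(`cutM_insert_det`), where `u` is row `i` of `Y_A` cut to `S` and `adj` is the adjugate of the
matrix on `S`. The symmetric part of that matrix is `s • 1`, so the quadratic form is nonnegative
(for `s = 0` by continuity). Conditionally on the other rows, `D_{S ∪ {i}}` is thus a nonnegative
constant plus a sum of squares of linear forms in the Gaussians of row `i` (`row_step`). Divided by
its mean, it is a convex combination of `1` and of squares of standard Gaussians, so by concavity
of the logarithm the expected logarithm is at least the logarithm of the conditional mean minus
`C₁` (`quad_gaussian`). The conditional mean is `s D_S + ∑_{j ∈ S} a_{ij}² D_{S ∖ j}` (`minorG`),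
the recursion of the matching polynomial `F_S` (`matPoly_insert`). Hence `E D_S = F_S`
(`minorD_mean`), and a second use of concavity, with weights `s F_S / F_{S ∪ {i}}` and
`a_{ij}² F_{S ∖ j} / F_{S ∪ {i}}`, carries out the induction (`minorD_convL`). A single row costs
nothing, so that the total loss is at most `(N - 1) C₁`.

The logarithm enters through the convex function `x - log x` with values in `[0, ∞]` (`convL`),
equal to `∞` on `x ≤ 0`. Tonelli's theorem and Jensen's inequality then need no integrability
conditions, and almost sure positivity of the determinant and integrability of its logarithm are
read off from the final bound (`convL_extract`). If `F = 0`, the determinant vanishes almost surely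
and both logarithms take the value `Real.log 0 = 0`.
-/

open MeasureTheory ProbabilityTheory Matrix

/-- Total weighted `k`-matching of the weighted graph encoded by the
skew-symmetric matrix `A`. -/
noncomputable def phiW {N : ℕ} (A : Matrix (Fin N) (Fin N) ℝ) (k : ℕ) : ℝ :=
  ∑ M ∈ Finset.univ.filter
      (fun M : Finset (Fin N × Fin N) =>
        ((∀ p ∈ M, p.1 < p.2) ∧
          ∀ p ∈ M, ∀ q ∈ M, p ≠ q →
            p.1 ≠ q.1 ∧ p.1 ≠ q.2 ∧ p.2 ≠ q.1 ∧ p.2 ≠ q.2) ∧ M.card = k),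
    ∏ p ∈ M, (A p.1 p.2) ^ 2

/-- The weighted matching polynomial `Φ(t, A)`. -/
noncomputable def PhiW {N : ℕ} (A : Matrix (Fin N) (Fin N) ℝ) (t : ℝ) : ℝ :=
  ∑ k ∈ Finset.range (N / 2 + 1), phiW A k * t ^ (N / 2 - k)

/-- `Φ(t,A)`, multiplied by `√t` when `N` is odd. -/
noncomputable def PhiFull {N : ℕ} (A : Matrix (Fin N) (Fin N) ℝ) (t : ℝ) : ℝ :=
  (if Even N then 1 else Real.sqrt t) * PhiW A t

/-- Index type of the strictly upper-triangular positions. -/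
abbrev PairIdx (N : ℕ) := {p : Fin N × Fin N // p.1 < p.2}

/-- The canonical product of standard Gaussian measures, one for each edge slot. -/
noncomputable def gaussPi (N : ℕ) : Measure (PairIdx N → ℝ) :=
  Measure.pi fun _ => gaussianReal 0 1

/-- The sample `Y_A(ξ)` of the random skew-symmetric matrix `Y_A`. -/
noncomputable def sampleY {N : ℕ} (A : Matrix (Fin N) (Fin N) ℝ)
    (ξ : PairIdx N → ℝ) : Matrix (Fin N) (Fin N) ℝ :=
  Matrix.of fun i j =>
    if h : i < j then A i j * ξ ⟨(i, j), h⟩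
    else if h : j < i then A i j * ξ ⟨(j, i), h⟩
    else 0

/-- `log Φ̃(t, A) = E log det(√t I_N + Y_A)` for i.i.d. standard Gaussian entries. -/
noncomputable def logPhiTilde {N : ℕ} (t : ℝ) (A : Matrix (Fin N) (Fin N) ℝ) : ℝ :=
  ∫ ξ, Real.log ((Real.sqrt t • (1 : Matrix (Fin N) (Fin N) ℝ) + sampleY A ξ).det) ∂(gaussPi N)

/-- The constant `C₁ = -(1/√(2π)) ∫ log(x²) e^{-x²/2} dx`. -/
noncomputable def C1 : ℝ :=
  -(Real.sqrt (2 * Real.pi))⁻¹ * ∫ x : ℝ, Real.log (x ^ 2) * Real.exp (-x ^ 2 / 2)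

/-! ### Principal minors of `s • 1 + Y` -/

section PrincipalMinors

variable {ι : Type*} [Fintype ι] [DecidableEq ι]

/-- The matrix `s • 1 + Y` restricted to `S × S` and completed by the identity outside `S`. -/
noncomputable def cutM (s : ℝ) (Y : Matrix ι ι ℝ) (S : Finset ι) : Matrix ι ι ℝ :=
  Matrix.of fun i j =>
    if i ∈ S ∧ j ∈ S then (s • (1 : Matrix ι ι ℝ) + Y) i j else if i = j then 1 else 0

/-- Since `Y` is skew-symmetric, the symmetric part of `cutM s Y S` is diagonal. -/
lemma cutM_quad (s : ℝ) {Y : Matrix ι ι ℝ} (hY : Yᵀ = -Y) (S : Finset ι) (c : ι → ℝ) :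
    c ⬝ᵥ (cutM s Y S *ᵥ c) = ∑ k, (if k ∈ S then s else 1) * c k ^ 2 := by
  have h1 : c ⬝ᵥ (cutM s Y S *ᵥ c) = ∑ i, ∑ j, c i * cutM s Y S i j * c j := by
    simp [dotProduct, mulVec, Finset.mul_sum, mul_assoc]
  have h2 : ∑ i, ∑ j, c i * cutM s Y S i j * c j = ∑ i, ∑ j, c i * cutM s Y S j i * c j := by
    rw [Finset.sum_comm]
    exact Finset.sum_congr rfl fun i _ => Finset.sum_congr rfl fun j _ => by ring
  have hY' : ∀ i j, Y j i = - Y i j := fun i j => by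
    have := congrFun (congrFun hY i) j
    simpa using this
  have h3 : ∀ i j, cutM s Y S i j + cutM s Y S j i
      = if i = j then 2 * (if i ∈ S then s else 1) else 0 := by
    intro i j
    have := hY' i j
    have hii := hY' i i
    by_cases hij : i = j
    · subst hij
      by_cases hi : i ∈ S
      · simp [cutM, hi]; linarith
      · simp [cutM, hi]; norm_num
    · by_cases hi : i ∈ S <;> by_cases hj : j ∈ S <;>
        simp [cutM, hi, hj, hij, Ne.symm hij, Matrix.one_apply, this]
  have h4 : 2 * (c ⬝ᵥ (cutM s Y S *ᵥ c)) = 2 * ∑ k, (if k ∈ S then s else 1) * c k ^ 2 := by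
    rw [two_mul]
    nth_rewrite 2 [h1]
    rw [h2, h1, ← Finset.sum_add_distrib, Finset.mul_sum]
    refine Finset.sum_congr rfl fun i _ => ?_
    rw [← Finset.sum_add_distrib]
    have : ∀ j, c i * cutM s Y S i j * c j + c i * cutM s Y S j i * c j
        = c i * (if i = j then 2 * (if i ∈ S then s else 1) else 0) * c j := by
      intro j; rw [← h3 i j]; ring
    simp only [this]
    rw [Finset.sum_eq_single i]
    · simp only [if_true]; ring
    · intro b _ hb; simp [Ne.symm hb]
    · simp
  linarith

lemma cutM_updateRow_det (s : ℝ) (Y : Matrix ι ι ℝ) (S : Finset ι) {j : ι} (hj : j ∈ S) :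
    ((cutM s Y S).updateRow j (Pi.single j 1)).det = (cutM s Y (S.erase j)).det := by
  refine Matrix.det_eq_of_forall_row_eq_smul_add_const
    (fun k => if k = j then 0 else cutM s Y S k j) j (by simp) ?_
  intro a b
  by_cases ha : a = j
  · subst ha
    by_cases hb : b = a
    · subst hb; simp [cutM]
    · simp [cutM, hb, Ne.symm hb]
  · by_cases hb : b = j
    · subst hb; simp [cutM, ha]
    · simp [cutM, ha, hb, Ne.symm hb]

lemma cutM_adjugate_diag (s : ℝ) (Y : Matrix ι ι ℝ) (S : Finset ι) {j : ι} (hj : j ∈ S) :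
    (cutM s Y S).adjugate j j = (cutM s Y (S.erase j)).det := by
  rw [Matrix.adjugate_apply, cutM_updateRow_det s Y S hj]

/-- Row `i` of `Y`, cut down to the columns in `S`. -/
def rowCut (Y : Matrix ι ι ℝ) (S : Finset ι) (i : ι) : ι → ℝ := fun j => if j ∈ S then Y i j else 0

/-- Schur complement: subtracting from row `i` the combination `c` of the rows in `S` leaves only a
diagonal entry in row `i`. -/
lemma cutM_insert_det_aux (s : ℝ) {Y : Matrix ι ι ℝ} (hY : Yᵀ = -Y) (S : Finset ι) {i : ι}
    (hi : i ∉ S) (c : ι → ℝ) (hc : c ᵥ* cutM s Y S = rowCut Y S i) :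
    (cutM s Y (insert i S)).det = (s + c ⬝ᵥ rowCut Y S i) * (cutM s Y S).det := by
  have hY' : ∀ i j, Y j i = - Y i j := fun i j => by
    have := congrFun (congrFun hY i) j
    simpa using this
  have hcz : ∀ k, k ∉ S → c k = 0 := by
    intro k hk
    have h := congrFun hc k
    simp only [vecMul, dotProduct, rowCut, hk, if_false] at h
    rw [Finset.sum_eq_single k] at h
    · simpa [cutM, hk] using h
    · intro b _ hb; simp [cutM, hk, hb]
    · simp
  have hii : Y i i = 0 := by have := hY' i i; linarith
  set C := cutM s Y (insert i S) with hC
  set d : ι → ℝ := fun k => if k = i then 1 else - c k with hd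
  have hrow : (∑ k, d k • C k) = (s + c ⬝ᵥ rowCut Y S i) • (Pi.single i 1 : ι → ℝ) := by
    ext b
    have hsplit : (∑ k, d k • C k) b = C i b - ∑ k, c k * C k b := by
      have : ∀ k, d k * C k b = (if k = i then C i b else 0) - c k * C k b := by
        intro k
        by_cases hk : k = i
        · subst hk; simp [hd, hcz k hi]
        · simp [hd, hk]
      simp only [Finset.sum_apply, Pi.smul_apply, smul_eq_mul, this, Finset.sum_sub_distrib]
      simp
    rw [hsplit]
    by_cases hb : b = i
    · subst hb
      have : ∀ k, c k * C k b = - (c k * rowCut Y S b k) := by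
        intro k
        by_cases hk : k ∈ S
        · have hkb : k ≠ b := fun h => hi (h ▸ hk)
          simp [hC, cutM, hk, rowCut, hkb, hY' b k]
        · simp [hcz k hk]
      simp only [this, Finset.sum_neg_distrib]
      simp [hC, cutM, hii, dotProduct]
    · have : ∀ k, c k * C k b = c k * cutM s Y S k b := by
        intro k
        by_cases hk : k ∈ S
        · simp [hC, cutM, hk, hb]
        · simp [hcz k hk]
      simp only [this]
      have h := congrFun hc b
      simp only [vecMul, dotProduct] at h
      rw [h]
      by_cases hbS : b ∈ S
      · simp [hC, cutM, rowCut, hbS, hb, Ne.symm hb]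
      · simp [hC, cutM, rowCut, hbS, hb, Ne.symm hb]
  have h1 := Matrix.det_updateRow_sum C i d
  rw [hrow, Matrix.det_updateRow_smul, hC, cutM_updateRow_det s Y _ (Finset.mem_insert_self i S),
    Finset.erase_insert hi] at h1
  simp only [hd, if_true, one_smul] at h1
  rw [← h1]

lemma cutM_adj_quad {s : ℝ} {Y : Matrix ι ι ℝ} {S : Finset ι}
    (hdet : (cutM s Y S).det ≠ 0) (u : ι → ℝ) :
    u ⬝ᵥ ((cutM s Y S).adjugate *ᵥ u)
      = (cutM s Y S).det * ((u ᵥ* (cutM s Y S)⁻¹) ⬝ᵥ u) := by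
  rw [← dotProduct_mulVec, Matrix.inv_def, Ring.inverse_eq_inv', smul_mulVec, dotProduct_smul,
    smul_eq_mul, mul_inv_cancel_left₀ hdet]

lemma cutM_inv_vecMul {s : ℝ} {Y : Matrix ι ι ℝ} {S : Finset ι}
    (hdet : (cutM s Y S).det ≠ 0) (u : ι → ℝ) :
    (u ᵥ* (cutM s Y S)⁻¹) ᵥ* cutM s Y S = u := by
  rw [vecMul_vecMul, Matrix.nonsing_inv_mul _ (isUnit_iff_ne_zero.2 hdet), vecMul_one]

lemma cutM_inv_quad_nonneg {s : ℝ} (hs : 0 < s) {Y : Matrix ι ι ℝ} (hY : Yᵀ = -Y) {S : Finset ι}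
    (hdet : (cutM s Y S).det ≠ 0) (u : ι → ℝ) :
    0 ≤ (u ᵥ* (cutM s Y S)⁻¹) ⬝ᵥ u := by
  set c := u ᵥ* (cutM s Y S)⁻¹ with hc
  have h := cutM_inv_vecMul hdet u
  have : c ⬝ᵥ u = c ⬝ᵥ (cutM s Y S *ᵥ c) := by
    rw [dotProduct_mulVec, h, dotProduct_comm]
  rw [this, cutM_quad s hY]
  exact Finset.sum_nonneg fun k _ => by split_ifs <;> positivity

lemma cutM_det_pos {s : ℝ} (hs : 0 < s) {Y : Matrix ι ι ℝ} (hY : Yᵀ = -Y) (S : Finset ι) :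
    0 < (cutM s Y S).det := by
  induction S using Finset.induction_on with
  | empty =>
    have : cutM s Y ∅ = 1 := by ext i j; simp [cutM, Matrix.one_apply]
    rw [this, det_one]; exact one_pos
  | insert i S hi ih =>
    rw [cutM_insert_det_aux s hY S hi _ (cutM_inv_vecMul ih.ne' (rowCut Y S i))]
    have := cutM_inv_quad_nonneg hs hY ih.ne' (rowCut Y S i)
    positivity

lemma continuous_cutM {κ : Type*} [DecidableEq κ] (Y : Matrix κ κ ℝ) (S : Finset κ) :
    Continuous fun s => cutM s Y S := by
  refine continuous_matrix fun i j => ?_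
  simp only [cutM, of_apply, Matrix.add_apply, Matrix.smul_apply, smul_eq_mul]
  split_ifs <;> fun_prop

/-- Passage from `s > 0` to `s ≥ 0` for closed conditions. -/
lemma closed_nonneg {P : ℝ → Prop} (hP : IsClosed {s | P s}) (h : ∀ s, 0 < s → P s)
    {s : ℝ} (hs : 0 ≤ s) : P s := by
  have : closure (Set.Ioi (0 : ℝ)) ⊆ {s | P s} := closure_minimal (fun s hs => h s hs) hP
  rw [closure_Ioi] at this
  exact this hs

lemma cutM_det_nonneg {s : ℝ} (hs : 0 ≤ s) {Y : Matrix ι ι ℝ} (hY : Yᵀ = -Y) (S : Finset ι) :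
    0 ≤ (cutM s Y S).det :=
  closed_nonneg (P := fun s => 0 ≤ (cutM s Y S).det)
    (isClosed_le continuous_const (continuous_cutM Y S).matrix_det)
    (fun _ hs => (cutM_det_pos hs hY S).le) hs

lemma cutM_adj_nonneg {s : ℝ} (hs : 0 ≤ s) {Y : Matrix ι ι ℝ} (hY : Yᵀ = -Y) (S : Finset ι)
    (u : ι → ℝ) : 0 ≤ u ⬝ᵥ ((cutM s Y S).adjugate *ᵥ u) := by
  refine closed_nonneg (P := fun s => 0 ≤ u ⬝ᵥ ((cutM s Y S).adjugate *ᵥ u))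
    (isClosed_le continuous_const ?_) (fun s hs => ?_) hs
  · exact continuous_const.dotProduct
      ((continuous_cutM Y S).matrix_adjugate.matrix_mulVec continuous_const)
  · have hd := cutM_det_pos hs hY S
    rw [cutM_adj_quad hd.ne']
    exact mul_nonneg hd.le (cutM_inv_quad_nonneg hs hY hd.ne' u)

/-- Adding the index `i` to `S` turns the minor into a quadratic polynomial in row `i`, whose
quadratic part is nonnegative by `cutM_adj_nonneg`. -/
lemma cutM_insert_det {s : ℝ} (hs : 0 ≤ s) {Y : Matrix ι ι ℝ} (hY : Yᵀ = -Y) (S : Finset ι) {i : ι}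
    (hi : i ∉ S) :
    (cutM s Y (insert i S)).det
      = s * (cutM s Y S).det + rowCut Y S i ⬝ᵥ ((cutM s Y S).adjugate *ᵥ rowCut Y S i) := by
  refine closed_nonneg (P := fun s => (cutM s Y (insert i S)).det
      = s * (cutM s Y S).det + rowCut Y S i ⬝ᵥ ((cutM s Y S).adjugate *ᵥ rowCut Y S i))
    (isClosed_eq (continuous_cutM Y _).matrix_det ?_) (fun s hs => ?_) hs
  · exact (continuous_id.mul (continuous_cutM Y S).matrix_det).add (continuous_const.dotProduct
      ((continuous_cutM Y S).matrix_adjugate.matrix_mulVec continuous_const))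
  · have hd := cutM_det_pos hs hY S
    rw [cutM_insert_det_aux s hY S hi _ (cutM_inv_vecMul hd.ne' (rowCut Y S i)),
      cutM_adj_quad hd.ne']
    ring

end PrincipalMinors

/-! ### The function `x - log x` and the Gaussian measure -/

/-- The convex function `x ↦ x - log x`, with value `∞` for `x ≤ 0`. -/
noncomputable def convL (x : ℝ) : ENNReal := if x ≤ 0 then ⊤ else ENNReal.ofReal (x - Real.log x)

lemma measurable_convL : Measurable convL :=
  Measurable.ite measurableSet_Iic measurable_const (by fun_prop)

lemma convL_one : convL 1 = 1 := by
  have : ¬ (1 : ℝ) ≤ 0 := by norm_num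
  simp [convL, this]

/-- Jensen's inequality for `convL`; points of weight `0` may lie outside `(0, ∞)`. -/
lemma convL_sum {κ : Type*} (T : Finset κ) (p x : κ → ℝ) (hp : ∀ k ∈ T, 0 ≤ p k)
    (h1 : ∑ k ∈ T, p k = 1) :
    convL (∑ k ∈ T, p k * x k) ≤ ∑ k ∈ T, ENNReal.ofReal (p k) * convL (x k) := by
  classical
  by_cases hbad : ∃ k ∈ T, 0 < p k ∧ x k ≤ 0
  · obtain ⟨k, hk, hpk, hxk⟩ := hbad
    have : ∑ k ∈ T, ENNReal.ofReal (p k) * convL (x k) = ⊤ := by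
      rw [ENNReal.sum_eq_top]
      exact ⟨k, hk, by simp [convL, hxk, ENNReal.mul_top, hpk]⟩
    rw [this]; exact le_top
  push Not at hbad
  set T' := T.filter (fun k => 0 < p k) with hT'
  have hz : ∀ k ∈ T, k ∉ T' → p k = 0 := by
    intro k hk hk'
    have : ¬ 0 < p k := fun h => hk' (Finset.mem_filter.2 ⟨hk, h⟩)
    exact le_antisymm (not_lt.1 this) (hp k hk)
  have hsub : T' ⊆ T := Finset.filter_subset _ _
  rw [← Finset.sum_subset hsub (f := fun k => p k * x k) (fun k hk hk' => by simp [hz k hk hk']),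
    ← Finset.sum_subset hsub (f := fun k => ENNReal.ofReal (p k) * convL (x k))
      (fun k hk hk' => by simp [hz k hk hk'])]
  rw [← Finset.sum_subset hsub (fun k hk hk' => hz k hk hk')] at h1
  have hp' : ∀ k ∈ T', 0 < p k := fun k hk => (Finset.mem_filter.1 hk).2
  have hx' : ∀ k ∈ T', 0 < x k := fun k hk => hbad k (hsub hk) (hp' k hk)
  have hne : T'.Nonempty := by
    rw [Finset.nonempty_iff_ne_empty]; rintro h; simp [h] at h1
  have hpos : 0 < ∑ k ∈ T', p k * x k :=
    Finset.sum_pos (fun k hk => mul_pos (hp' k hk) (hx' k hk)) hne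
  have hlog : ∑ k ∈ T', p k * Real.log (x k) ≤ Real.log (∑ k ∈ T', p k * x k) := by
    have := strictConcaveOn_log_Ioi.concaveOn.le_map_sum (t := T') (w := p) (p := x)
      (fun k hk => (hp' k hk).le) h1 (fun k hk => hx' k hk)
    simpa using this
  have hnn : ∀ k ∈ T', 0 ≤ x k - Real.log (x k) := fun k hk => by
    have := Real.log_le_sub_one_of_pos (hx' k hk); linarith
  have hR : ∑ k ∈ T', ENNReal.ofReal (p k) * convL (x k)
      = ENNReal.ofReal (∑ k ∈ T', p k * (x k - Real.log (x k))) := by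
    rw [ENNReal.ofReal_sum_of_nonneg (fun k hk => mul_nonneg (hp' k hk).le (hnn k hk))]
    refine Finset.sum_congr rfl fun k hk => ?_
    rw [ENNReal.ofReal_mul (hp' k hk).le, convL, if_neg (not_le.2 (hx' k hk))]
  rw [hR, convL, if_neg (not_le.2 hpos)]
  refine ENNReal.ofReal_le_ofReal ?_
  simp only [mul_sub, Finset.sum_sub_distrib]
  linarith

lemma integrable_log_sq_gaussian :
    Integrable (fun x : ℝ => Real.log (x ^ 2)) (gaussianReal 0 1) := by
  rw [gaussianReal_of_var_ne_zero 0 one_ne_zero]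
  have hlt : ∀ᵐ x : ℝ, gaussianPDF 0 1 x < ⊤ := Filter.Eventually.of_forall fun x => gaussianPDF_lt_top
  rw [integrable_withDensity_iff (measurable_gaussianPDF 0 1) hlt]
  simp only [toReal_gaussianPDF]
  have hbound : ∀ x, gaussianPDFReal 0 1 x ≤ 1 := by
    intro x
    rw [gaussianPDFReal]
    have h1 : (√(2 * Real.pi * (1 : NNReal)))⁻¹ ≤ 1 := by
      apply inv_le_one_of_one_le₀
      rw [Real.one_le_sqrt]
      have := Real.pi_gt_three
      simp; linarith
    have h2 : Real.exp (-(x - 0) ^ 2 / (2 * (1 : NNReal))) ≤ 1 := by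
      rw [Real.exp_le_one_iff]
      have := sq_nonneg (x - 0)
      simp; nlinarith
    exact mul_le_one₀ h1 (Real.exp_pos _).le h2
  have hI1 : IntegrableOn (fun x : ℝ => Real.log x) (Set.Ioc (-1) 1) := by
    have := (intervalIntegral.intervalIntegrable_log' (a := -1) (b := 1))
    rwa [intervalIntegrable_iff_integrableOn_Ioc_of_le (by norm_num)] at this
  have hI1' : Integrable ((Set.Ioc (-1:ℝ) 1).indicator fun x => 2 * |Real.log x|) := by
    rw [integrable_indicator_iff measurableSet_Ioc]
    exact hI1.abs.const_mul 2
  have hI2 : Integrable fun x : ℝ => gaussianPDFReal 0 1 x * x ^ 2 := by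
    have h : Integrable (fun x : ℝ => x ^ 2) (gaussianReal 0 1) :=
      (memLp_id_gaussianReal (μ := 0) (v := 1) 2).integrable_sq
    rw [gaussianReal_of_var_ne_zero 0 one_ne_zero,
      integrable_withDensity_iff (measurable_gaussianPDF 0 1) hlt] at h
    simpa [toReal_gaussianPDF, mul_comm] using h
  refine (hI1'.add hI2).mono' ?_ (Filter.Eventually.of_forall fun x => ?_)
  · exact ((Real.measurable_log.comp (measurable_id.pow_const 2)).mul
      (measurable_gaussianPDFReal 0 1)).aestronglyMeasurable
  · have hg0 := gaussianPDFReal_nonneg 0 1 x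
    have hg1 := hbound x
    rw [Real.norm_eq_abs, abs_mul, abs_of_nonneg hg0]
    simp only [Pi.add_apply]
    have hlogsq : Real.log (x ^ 2) = 2 * Real.log x := by
      rw [Real.log_pow]; norm_num
    by_cases hx : x ∈ Set.Ioc (-1:ℝ) 1
    · rw [Set.indicator_of_mem hx, hlogsq, abs_mul, abs_two]
      have : 0 ≤ 2 * |Real.log x| := by positivity
      have := mul_le_of_le_one_right this hg1
      nlinarith [mul_nonneg hg0 (sq_nonneg x)]
    · rw [Set.indicator_of_notMem hx, zero_add]
      have hx1 : 1 ≤ x ^ 2 := by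
        rw [Set.mem_Ioc, not_and_or, not_lt, not_le] at hx
        rcases hx with h | h <;> nlinarith
      rw [abs_of_nonneg (Real.log_nonneg hx1), mul_comm]
      have := Real.log_le_sub_one_of_pos (lt_of_lt_of_le one_pos hx1)
      exact mul_le_mul_of_nonneg_left (by linarith) hg0

lemma integral_log_sq_gaussian : ∫ x, Real.log (x ^ 2) ∂(gaussianReal 0 1) = - C1 := by
  rw [integral_gaussianReal_eq_integral_smul one_ne_zero, C1, neg_mul, neg_neg,
    ← integral_const_mul]
  refine integral_congr_ae (Filter.Eventually.of_forall fun x => ?_)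
  simp [gaussianPDFReal]
  ring

lemma integrable_sq_gaussian : Integrable (fun x : ℝ => x ^ 2) (gaussianReal 0 1) :=
  (memLp_id_gaussianReal (μ := 0) (v := 1) 2).integrable_sq

lemma integral_sq_gaussian : ∫ x, x ^ 2 ∂(gaussianReal 0 1) = 1 := by
  have h := variance_fun_id_gaussianReal (μ := 0) (v := 1)
  rw [variance_eq_integral (by fun_prop)] at h
  simpa using h

lemma C1_nonneg : 0 ≤ C1 := by
  have h : ∫ x, Real.log (x ^ 2) ∂(gaussianReal 0 1) ≤ ∫ x, (x ^ 2 - 1) ∂(gaussianReal 0 1) := by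
    refine integral_mono_ae integrable_log_sq_gaussian
      (integrable_sq_gaussian.sub (integrable_const _)) ?_
    have hne : ∀ᵐ x ∂(gaussianReal 0 1), x ≠ 0 := by
      have := nullSingletonClass_gaussianReal (μ := 0) (v := 1) one_ne_zero
      simp [ae_iff]
    filter_upwards [hne] with x hx
    exact Real.log_le_sub_one_of_pos (by positivity)
  rw [integral_log_sq_gaussian, integral_sub integrable_sq_gaussian (integrable_const _),
    integral_sq_gaussian] at h
  simp at h
  exact h

lemma lintegral_convL_sq_gaussian :
    ∫⁻ x, convL (x ^ 2) ∂(gaussianReal 0 1) = 1 + ENNReal.ofReal C1 := by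
  have hne : ∀ᵐ x ∂(gaussianReal 0 1), x ≠ 0 := by
    have := nullSingletonClass_gaussianReal (μ := 0) (v := 1) one_ne_zero
    simp [ae_iff]
  have h1 : ∫⁻ x, convL (x ^ 2) ∂(gaussianReal 0 1)
      = ∫⁻ x, ENNReal.ofReal (x ^ 2 - Real.log (x ^ 2)) ∂(gaussianReal 0 1) := by
    refine lintegral_congr_ae ?_
    filter_upwards [hne] with x hx
    have : 0 < x ^ 2 := by positivity
    simp only [convL, if_neg (not_le.2 this)]
  rw [h1, ← ofReal_integral_eq_lintegral_ofReal (f := fun x : ℝ => x ^ 2 - Real.log (x ^ 2))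
    (integrable_sq_gaussian.sub integrable_log_sq_gaussian),
    integral_sub integrable_sq_gaussian integrable_log_sq_gaussian, integral_sq_gaussian,
    integral_log_sq_gaussian, sub_neg_eq_add, ENNReal.ofReal_add zero_le_one C1_nonneg,
    ENNReal.ofReal_one]
  filter_upwards [hne] with x hx
  have : 0 < x ^ 2 := by positivity
  have := Real.log_le_sub_one_of_pos this
  simp only [Pi.zero_apply]; linarith

/-- A finite bound on `∫ convL (X)` yields almost sure positivity of `X`, integrability of `log X`
and the corresponding bound between Bochner integrals. -/
lemma convL_extract {Ω : Type*} [MeasurableSpace Ω] {μ : Measure Ω} {X : Ω → ℝ}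
    (hXm : Measurable X) (hXi : Integrable X μ) {K : ℝ} (hK : 0 ≤ K)
    (hL : ∫⁻ ω, convL (X ω) ∂μ ≤ ENNReal.ofReal K) :
    (∀ᵐ ω ∂μ, 0 < X ω) ∧ Integrable (fun ω => Real.log (X ω)) μ ∧
      ∫ ω, X ω ∂μ - ∫ ω, Real.log (X ω) ∂μ ≤ K := by
  have hfin : ∫⁻ ω, convL (X ω) ∂μ ≠ ⊤ := ne_top_of_le_ne_top ENNReal.ofReal_ne_top hL
  have hpos : ∀ᵐ ω ∂μ, 0 < X ω := by
    filter_upwards [ae_lt_top (measurable_convL.comp hXm) hfin] with ω hω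
    by_contra h
    simp [convL, not_lt.1 h] at hω
  have hnn : 0 ≤ᵐ[μ] fun ω => X ω - Real.log (X ω) := by
    filter_upwards [hpos] with ω hω
    have := Real.log_le_sub_one_of_pos hω
    simp only [Pi.zero_apply]; linarith
  have heq : ∫⁻ ω, convL (X ω) ∂μ = ∫⁻ ω, ENNReal.ofReal (X ω - Real.log (X ω)) ∂μ := by
    refine lintegral_congr_ae ?_
    filter_upwards [hpos] with ω hω
    simp only [convL, if_neg (not_le.2 hω)]
  rw [heq] at hL hfin
  have hInt : Integrable (fun ω => X ω - Real.log (X ω)) μ := by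
    refine ⟨(hXm.sub hXm.log).aestronglyMeasurable, ?_⟩
    rw [hasFiniteIntegral_iff_ofReal hnn]
    exact lt_top_iff_ne_top.2 hfin
  have hlog : Integrable (fun ω => Real.log (X ω)) μ := by
    refine (hXi.sub hInt).congr (Filter.Eventually.of_forall fun ω => ?_)
    simp
  refine ⟨hpos, hlog, ?_⟩
  rw [← integral_sub hXi hlog]
  rw [← ofReal_integral_eq_lintegral_ofReal hInt hnn] at hL
  exact (ENNReal.ofReal_le_ofReal_iff hK).1 hL

/-- Rescaling: if `X` has mean `1` and `log X` loses at most `K` in Jensen's inequality, then so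
does `log (g X)`. -/
lemma convL_scale {Ω : Type*} [MeasurableSpace Ω] {μ : Measure Ω} [IsProbabilityMeasure μ]
    {X : Ω → ℝ} (hXm : Measurable X) (hXi : Integrable X μ) (hX1 : ∫ ω, X ω ∂μ = 1)
    {K : ℝ} (hK : 0 ≤ K) (hL : ∫⁻ ω, convL (X ω) ∂μ ≤ 1 + ENNReal.ofReal K) (g : ℝ) :
    ∫⁻ ω, convL (g * X ω) ∂μ ≤ convL g + ENNReal.ofReal K := by
  by_cases hg : g ≤ 0
  · simp [convL, hg]
  have hg0 : 0 < g := not_le.1 hg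
  rw [← ENNReal.ofReal_one, ← ENNReal.ofReal_add zero_le_one hK] at hL
  obtain ⟨hpos, hlog, hle⟩ := convL_extract hXm hXi (by linarith) hL
  rw [hX1] at hle
  have heq : ∫⁻ ω, convL (g * X ω) ∂μ
      = ∫⁻ ω, ENNReal.ofReal (g * X ω - Real.log g - Real.log (X ω)) ∂μ := by
    refine lintegral_congr_ae ?_
    filter_upwards [hpos] with ω hω
    have : 0 < g * X ω := mul_pos hg0 hω
    simp only [convL, if_neg (not_le.2 this), Real.log_mul hg0.ne' hω.ne', sub_sub]
  have hi1 : Integrable (fun ω => g * X ω - Real.log g) μ :=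
    (hXi.const_mul g).sub (integrable_const _)
  have hnng : 0 ≤ g - Real.log g := by
    have := Real.log_le_sub_one_of_pos hg0; linarith
  rw [heq, ← ofReal_integral_eq_lintegral_ofReal
    (f := fun ω => g * X ω - Real.log g - Real.log (X ω)) (hi1.sub hlog)]
  · rw [convL, if_neg hg, ← ENNReal.ofReal_add hnng hK]
    refine ENNReal.ofReal_le_ofReal ?_
    have e1 : ∫ ω, (g * X ω - Real.log g - Real.log (X ω)) ∂μ
        = g - Real.log g - ∫ ω, Real.log (X ω) ∂μ := by
      rw [integral_sub hi1 hlog, integral_sub (hXi.const_mul g) (integrable_const _),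
        integral_const_mul, hX1]
      simp
    linarith
  · filter_upwards [hpos] with ω hω
    have h := Real.log_le_sub_one_of_pos (mul_pos hg0 hω)
    rw [Real.log_mul hg0.ne' hω.ne'] at h
    simp only [Pi.zero_apply]; linarith

/-! ### Quadratic forms in Gaussian variables -/

/-- The standard Gaussian measure on `ℝ^κ`. -/
noncomputable abbrev stdG (κ : Type*) [Fintype κ] : Measure (κ → ℝ) :=
  Measure.pi fun _ => gaussianReal 0 1

/-- A unit linear form of independent standard Gaussians is standard Gaussian. -/
lemma map_linear_gaussian {κ : Type*} [Fintype κ] (b : κ → ℝ) (hb : ∑ j, b j ^ 2 = 1) :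
    (stdG κ).map (fun y => ∑ j, b j * y j) = gaussianReal 0 1 := by
  have hm : Measurable (fun y : κ → ℝ => ∑ j, b j * y j) := by fun_prop
  have := Measure.isProbabilityMeasure_map (μ := stdG κ) hm.aemeasurable
  apply Measure.ext_of_charFun
  ext t
  have h := charFun_pi (μ := fun _ : κ => gaussianReal 0 1) (WithLp.toLp 2 (fun j => t * b j))
  rw [charFun_apply_real, integral_map hm.aemeasurable (by fun_prop)]
  rw [charFun_apply, integral_map (by fun_prop) (by fun_prop)] at h
  have hl : ∀ y : κ → ℝ, (inner ℝ (WithLp.toLp 2 y : EuclideanSpace ℝ κ)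
      (WithLp.toLp 2 (fun j => t * b j)) : ℝ) = t * ∑ j, b j * y j := by
    intro y
    simp [PiLp.inner_apply, Finset.mul_sum, mul_assoc]
  simp only [hl] at h
  have h' : ∫ x : κ → ℝ, Complex.exp (↑t * ↑(∑ j, b j * x j) * Complex.I) ∂stdG κ
     = ∏ i, charFun (gaussianReal 0 1) (t * b i) := by
    rw [← h]
    simp [stdG]
  rw [h']
  simp only [charFun_gaussianReal, ← Complex.exp_sum]
  congr 1
  have hb' : ∑ j, ((b j : ℂ)) ^ 2 = 1 := by exact_mod_cast hb
  simp [mul_pow, ← Finset.mul_sum, ← Finset.sum_div, hb']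

section OneStep

variable {κ σ : Type*} [Fintype κ] [Fintype σ]

lemma measurePreserving_linear (b : κ → ℝ) (hb : ∑ j, b j ^ 2 = 1) :
    MeasurePreserving (fun y : κ → ℝ => ∑ j, b j * y j) (stdG κ) (gaussianReal 0 1) :=
  ⟨by fun_prop, map_linear_gaussian b hb⟩

lemma linear_sq_gaussian (b : κ → ℝ) :
    Integrable (fun y : κ → ℝ => (∑ j, b j * y j) ^ 2) (stdG κ) ∧
      ∫ y, (∑ j, b j * y j) ^ 2 ∂(stdG κ) = ∑ j, b j ^ 2 := by
  set v := ∑ j, b j ^ 2 with hv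
  have hv0 : 0 ≤ v := Finset.sum_nonneg fun j _ => sq_nonneg _
  rcases hv0.eq_or_lt with h0 | hpos
  · have hb : ∀ j, b j = 0 := fun j => by
      have := (Finset.sum_eq_zero_iff_of_nonneg (fun j _ => sq_nonneg (b j))).1 (hv ▸ h0.symm) j
        (Finset.mem_univ j)
      exact pow_eq_zero_iff (two_ne_zero) |>.1 this
    simp [hb, ← h0]
  · have hb1 : ∑ j, (b j / √v) ^ 2 = 1 := by
      simp only [div_pow, Real.sq_sqrt hv0, ← Finset.sum_div]
      rw [← hv, div_self hpos.ne']
    have hmp := measurePreserving_linear _ hb1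
    have heq : ∀ y : κ → ℝ, (∑ j, b j * y j) ^ 2 = v * (∑ j, b j / √v * y j) ^ 2 := by
      intro y
      have : ∑ j, b j / √v * y j = (∑ j, b j * y j) / √v := by
        rw [Finset.sum_div]; exact Finset.sum_congr rfl fun j _ => by ring
      rw [this, div_pow, Real.sq_sqrt hv0]; field_simp
    simp only [heq]
    refine ⟨((hmp.integrable_comp (g := fun x : ℝ => x ^ 2) (by fun_prop)).2
      integrable_sq_gaussian).const_mul v, ?_⟩
    rw [integral_const_mul]
    have h := integral_map (μ := stdG κ) hmp.measurable.aemeasurable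
      (f := fun x : ℝ => x ^ 2) (by fun_prop)
    rw [hmp.map_eq, integral_sq_gaussian] at h
    rw [← h, mul_one]

/-- A nonnegative quadratic polynomial of Gaussians, written as a constant plus a sum of squares of
linear forms. -/
def sosF (c : ℝ) (B : σ → κ → ℝ) (y : κ → ℝ) : ℝ := c + ∑ s, (∑ j, B s j * y j) ^ 2

lemma measurable_sosF (c : ℝ) (B : σ → κ → ℝ) : Measurable (sosF c B) := by
  unfold sosF; fun_prop

lemma sosF_mean (c : ℝ) (B : σ → κ → ℝ) :
    Integrable (sosF c B) (stdG κ) ∧ ∫ y, sosF c B y ∂(stdG κ) = c + ∑ s, ∑ j, B s j ^ 2 := by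
  have hi : Integrable (fun y : κ → ℝ => ∑ s, (∑ j, B s j * y j) ^ 2) (stdG κ) :=
    integrable_finsetSum _ fun s _ => (linear_sq_gaussian (B s)).1
  refine ⟨(integrable_const c).add hi, ?_⟩
  unfold sosF
  rw [integral_add (integrable_const c) hi, integral_finsetSum _
    fun s _ => (linear_sq_gaussian (B s)).1]
  simp [(linear_sq_gaussian _).2]

/-- Divided by its mean, `sosF c B` is a convex combination of the constant `1` and of squares of
standard Gaussians, each of which loses at most `C₁` under the logarithm. -/
lemma sosF_convL {c : ℝ} (hc : 0 ≤ c) (B : σ → κ → ℝ) :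
    ∫⁻ y, convL (sosF c B y) ∂(stdG κ)
      ≤ convL (c + ∑ s, ∑ j, B s j ^ 2) + ENNReal.ofReal C1 := by
  set g := c + ∑ s, ∑ j, B s j ^ 2 with hg
  by_cases hg0 : g ≤ 0
  · simp [convL, hg0]
  have hgp : 0 < g := not_le.1 hg0
  set v : σ → ℝ := fun s => ∑ j, B s j ^ 2 with hv
  have hv0 : ∀ s, 0 ≤ v s := fun s => Finset.sum_nonneg fun j _ => sq_nonneg _
  set p : Option σ → ℝ := fun o => o.elim (c / g) (fun s => v s / g) with hp
  set z : Option σ → (κ → ℝ) → ℝ := fun o y => o.elim 1 (fun s => (∑ j, B s j / √(v s) * y j) ^ 2)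
    with hz
  have hp0 : ∀ o, 0 ≤ p o := by
    rintro (_ | s)
    · exact div_nonneg hc hgp.le
    · exact div_nonneg (hv0 s) hgp.le
  have hp1 : ∑ o, p o = 1 := by
    rw [Fintype.sum_option]
    simp only [hp, Option.elim]
    rw [← Finset.sum_div, ← add_div, ← hg, div_self hgp.ne']
  have hX : ∀ y, sosF c B y / g = ∑ o, p o * z o y := by
    intro y
    rw [Fintype.sum_option]
    simp only [hp, hz, Option.elim, sosF, add_div, mul_one, Finset.sum_div]
    congr 1
    refine Finset.sum_congr rfl fun s _ => ?_
    have h1 : ∑ j, B s j / √(v s) * y j = (∑ j, B s j * y j) / √(v s) := by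
      rw [Finset.sum_div]; exact Finset.sum_congr rfl fun j _ => by ring
    rw [h1, div_pow, Real.sq_sqrt (hv0 s)]
    rcases (hv0 s).eq_or_lt with h0 | hpos
    · have hb : ∀ j, B s j = 0 := fun j => by
        have := (Finset.sum_eq_zero_iff_of_nonneg (fun j _ => sq_nonneg (B s j))).1 h0.symm j
          (Finset.mem_univ j)
        exact pow_eq_zero_iff (two_ne_zero) |>.1 this
      simp [hb]
    · field_simp
  have hzm : ∀ o, Measurable (z o) := by
    rintro (_ | s)
    · exact measurable_const
    · simp only [hz, Option.elim]; fun_prop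
  have hzM : ∀ o, Measurable fun y => convL (z o y) := fun o => measurable_convL.comp (hzm o)
  have hzL : ∀ o, ENNReal.ofReal (p o) * ∫⁻ y, convL (z o y) ∂(stdG κ)
      ≤ ENNReal.ofReal (p o) * (1 + ENNReal.ofReal C1) := by
    rintro (_ | s)
    · gcongr
      simp [hz, convL_one]
    · rcases (hv0 s).eq_or_lt with h0 | hpos
      · simp [hp, ← h0]
      · gcongr
        have hb1 : ∑ j, (B s j / √(v s)) ^ 2 = 1 := by
          simp only [div_pow, Real.sq_sqrt (hv0 s), ← Finset.sum_div]
          rw [div_eq_one_iff_eq hpos.ne']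
        have hmp := measurePreserving_linear _ hb1
        have := hmp.lintegral_comp (f := fun x => convL (x ^ 2))
          (measurable_convL.comp (by fun_prop))
        rw [lintegral_convL_sq_gaussian] at this
        exact this.le
  have hm := sosF_mean c B
  have hL : ∫⁻ y, convL (sosF c B y / g) ∂(stdG κ) ≤ 1 + ENNReal.ofReal C1 := by
    calc ∫⁻ y, convL (sosF c B y / g) ∂(stdG κ)
        ≤ ∫⁻ y, ∑ o, ENNReal.ofReal (p o) * convL (z o y) ∂(stdG κ) := by
          refine lintegral_mono fun y => ?_
          rw [hX y]
          exact convL_sum _ p (fun o => z o y) (fun o _ => hp0 o) hp1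
      _ = ∑ o, ENNReal.ofReal (p o) * ∫⁻ y, convL (z o y) ∂(stdG κ) := by
          rw [lintegral_finsetSum _ fun o _ => (hzM o).const_mul _]
          exact Finset.sum_congr rfl fun o _ =>
            lintegral_const_mul _ (hzM o)
      _ ≤ ∑ o, ENNReal.ofReal (p o) * (1 + ENNReal.ofReal C1) :=
          Finset.sum_le_sum fun o _ => hzL o
      _ = 1 + ENNReal.ofReal C1 := by
          rw [← Finset.sum_mul, ← ENNReal.ofReal_sum_of_nonneg fun o _ => hp0 o, hp1]
          simp
  have hX1 : ∫ y, sosF c B y / g ∂(stdG κ) = 1 := by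
    rw [integral_div, hm.2, ← hg, div_self hgp.ne']
  have := convL_scale ((measurable_sosF c B).div_const g) (hm.1.div_const g) hX1 C1_nonneg hL g
  simpa only [mul_div_cancel₀ _ hgp.ne'] using this

variable [DecidableEq κ]

/-- A quadratic form with nonnegative values is a sum of squares of linear forms. -/
lemma exists_sos (P : Matrix κ κ ℝ) (hP : ∀ y : κ → ℝ, 0 ≤ y ⬝ᵥ (P *ᵥ y)) :
    ∃ B : κ → κ → ℝ, (∀ y, y ⬝ᵥ (P *ᵥ y) = ∑ s, (∑ j, B s j * y j) ^ 2) ∧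
      P.trace = ∑ s, ∑ j, B s j ^ 2 := by
  set Q : Matrix κ κ ℝ := (1 / 2 : ℝ) • (P + Pᵀ) with hQ
  have hq : ∀ y, y ⬝ᵥ (Q *ᵥ y) = y ⬝ᵥ (P *ᵥ y) := by
    intro y
    have h1 : y ⬝ᵥ (Pᵀ *ᵥ y) = y ⬝ᵥ (P *ᵥ y) := by
      rw [mulVec_transpose, dotProduct_comm, dotProduct_mulVec]
    rw [hQ, smul_mulVec, add_mulVec, dotProduct_smul, dotProduct_add, h1, smul_eq_mul]
    ring
  have hpsd : Q.PosSemidef := by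
    refine PosSemidef.of_dotProduct_mulVec_nonneg ?_ fun y => ?_
    · ext i j; simp [hQ, add_comm]
    · rw [star_trivial, hq]; exact hP y
  open scoped MatrixOrder in
  obtain ⟨B, hB⟩ := CStarAlgebra.nonneg_iff_eq_star_mul_self.mp hpsd.nonneg
  have hB' : Q = Bᵀ * B := by rw [hB]; rfl
  refine ⟨B, fun y => ?_, ?_⟩
  · rw [← hq, hB', ← mulVec_mulVec, dotProduct_mulVec, vecMul_transpose]
    simp [dotProduct, mulVec, sq]
  · have : P.trace = Q.trace := by
      rw [hQ, trace_smul, trace_add, trace_transpose, smul_eq_mul]; ring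
    rw [this, hB', Finset.sum_comm]
    simp [trace, Matrix.mul_apply, sq]

/-- A nonnegative constant plus a nonnegative quadratic form in Gaussians has mean `c + tr P`, and
Jensen's inequality for its logarithm loses at most `C₁`. -/
lemma quad_gaussian {c : ℝ} (hc : 0 ≤ c) (P : Matrix κ κ ℝ) (hP : ∀ y : κ → ℝ, 0 ≤ y ⬝ᵥ (P *ᵥ y)) :
    ∫⁻ y, convL (c + y ⬝ᵥ (P *ᵥ y)) ∂(stdG κ) ≤ convL (c + P.trace) + ENNReal.ofReal C1 ∧
    ∫⁻ y, ENNReal.ofReal (c + y ⬝ᵥ (P *ᵥ y)) ∂(stdG κ) = ENNReal.ofReal (c + P.trace) := by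
  obtain ⟨B, hB, htr⟩ := exists_sos P hP
  have hf : ∀ y, c + y ⬝ᵥ (P *ᵥ y) = sosF c B y := fun y => by rw [hB, sosF]
  simp only [hf, htr]
  refine ⟨sosF_convL hc B, ?_⟩
  rw [← (sosF_mean c B).2, ofReal_integral_eq_lintegral_ofReal (sosF_mean c B).1]
  exact Filter.Eventually.of_forall fun y => by
    rw [← hf]; exact add_nonneg hc (hP y)

end OneStep

/-! ### Matchings -/

section Matchings

variable {N : ℕ}

/-- `M` is a matching, each edge being listed as an increasing pair. -/
def IsMat (M : Finset (Fin N × Fin N)) : Prop :=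
  (∀ p ∈ M, p.1 < p.2) ∧
    ∀ p ∈ M, ∀ q ∈ M, p ≠ q → p.1 ≠ q.1 ∧ p.1 ≠ q.2 ∧ p.2 ≠ q.1 ∧ p.2 ≠ q.2

open Classical in
/-- The matchings of the complete graph on the vertex set `S`. -/
noncomputable def matS (S : Finset (Fin N)) : Finset (Finset (Fin N × Fin N)) :=
  Finset.univ.filter fun M => IsMat M ∧ ∀ p ∈ M, p.1 ∈ S ∧ p.2 ∈ S

lemma mem_matS {S : Finset (Fin N)} {M : Finset (Fin N × Fin N)} :
    M ∈ matS S ↔ IsMat M ∧ ∀ p ∈ M, p.1 ∈ S ∧ p.2 ∈ S := by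
  simp [matS]

/-- The homogeneous matching polynomial of the vertex set `S`: a matching `M` contributes
`∏ a_{ij}²` times one factor `s` for each unmatched vertex. -/
noncomputable def matPoly (s : ℝ) (A : Matrix (Fin N) (Fin N) ℝ) (S : Finset (Fin N)) : ℝ :=
  ∑ M ∈ matS S, (∏ p ∈ M, (A p.1 p.2) ^ 2) * s ^ (S.card - 2 * M.card)

lemma two_mul_card_le {S : Finset (Fin N)} {M : Finset (Fin N × Fin N)} (hM : M ∈ matS S) :
    2 * M.card ≤ S.card := by
  obtain ⟨⟨hlt, hdis⟩, hS⟩ := mem_matS.1 hM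
  have h1 : (M.image Prod.fst).card = M.card := Finset.card_image_of_injOn fun p hp q hq h => by
    by_contra hne; exact (hdis p hp q hq hne).1 h
  have h2 : (M.image Prod.snd).card = M.card := Finset.card_image_of_injOn fun p hp q hq h => by
    by_contra hne; exact (hdis p hp q hq hne).2.2.2 h
  have hd : Disjoint (M.image Prod.fst) (M.image Prod.snd) := by
    rw [Finset.disjoint_left]
    intro x hx hy
    obtain ⟨p, hp, rfl⟩ := Finset.mem_image.1 hx
    obtain ⟨q, hq, hqp⟩ := Finset.mem_image.1 hy
    by_cases hpq : p = q
    · subst hpq; exact (hlt p hp).ne hqp.symm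
    · exact (hdis p hp q hq hpq).2.1 hqp.symm
  have hsub : M.image Prod.fst ∪ M.image Prod.snd ⊆ S := by
    intro x hx
    rcases Finset.mem_union.1 hx with h | h
    · obtain ⟨p, hp, rfl⟩ := Finset.mem_image.1 h; exact (hS p hp).1
    · obtain ⟨p, hp, rfl⟩ := Finset.mem_image.1 h; exact (hS p hp).2
  have := Finset.card_le_card hsub
  rw [Finset.card_union_of_disjoint hd] at this
  omega

/-- A matching on `insert i S` either leaves `i` unmatched or contains an edge `ij` with `j ∈ S`;
since `i` is the smallest vertex, that edge is listed as `(i, j)`. -/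
lemma matS_insert {S : Finset (Fin N)} {i : Fin N} (hi : ∀ j ∈ S, i < j) :
    matS (insert i S)
      = matS S ∪ S.biUnion fun j => (matS (S.erase j)).image (insert (i, j)) := by
  have hiS : i ∉ S := fun h => lt_irrefl _ (hi i h)
  ext M
  simp only [Finset.mem_union, Finset.mem_biUnion, Finset.mem_image]
  constructor
  · intro hM
    obtain ⟨⟨hlt, hdis⟩, hS⟩ := mem_matS.1 hM
    by_cases hex : ∃ j, (i, j) ∈ M
    · right
      obtain ⟨j, hj⟩ := hex
      have hij : i < j := hlt _ hj
      have hjS : j ∈ S := by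
        have := (hS _ hj).2
        exact (Finset.mem_insert.1 this).resolve_left hij.ne'
      refine ⟨j, hjS, M.erase (i, j), mem_matS.2 ⟨⟨fun p hp => hlt p (Finset.mem_of_mem_erase hp),
        fun p hp q hq => hdis p (Finset.mem_of_mem_erase hp) q (Finset.mem_of_mem_erase hq)⟩, ?_⟩,
        Finset.insert_erase hj⟩
      intro p hp
      obtain ⟨hne, hpM⟩ := Finset.mem_erase.1 hp
      have hd := hdis p hpM (i, j) hj hne
      have hpS := hS p hpM
      simp only [Finset.mem_insert] at hpS
      exact ⟨Finset.mem_erase.2 ⟨hd.2.1, hpS.1.resolve_left hd.1⟩,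
        Finset.mem_erase.2 ⟨hd.2.2.2, hpS.2.resolve_left hd.2.2.1⟩⟩
    · left
      refine mem_matS.2 ⟨⟨hlt, hdis⟩, fun p hp => ?_⟩
      have hpS := hS p hp
      simp only [Finset.mem_insert] at hpS
      have h1 : p.1 ∈ S := hpS.1.resolve_left fun h => hex ⟨p.2, by rw [← h]; exact hp⟩
      have h2 := hi _ h1
      have h3 := hlt p hp
      exact ⟨h1, hpS.2.resolve_left fun h => by rw [h] at h3; exact lt_asymm h2 h3⟩
  · rintro (hM | ⟨j, hj, M, hM, rfl⟩)
    · obtain ⟨h1, h2⟩ := mem_matS.1 hM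
      exact mem_matS.2 ⟨h1, fun p hp => ⟨Finset.mem_insert_of_mem (h2 p hp).1,
        Finset.mem_insert_of_mem (h2 p hp).2⟩⟩
    · obtain ⟨⟨hlt, hdis⟩, h2⟩ := mem_matS.1 hM
      have hcross : ∀ p ∈ M, p.1 ≠ i ∧ p.1 ≠ j ∧ p.2 ≠ i ∧ p.2 ≠ j := by
        intro p hp
        have h := h2 p hp
        simp only [Finset.mem_erase] at h
        exact ⟨fun e => hiS (e ▸ h.1.2), h.1.1, fun e => hiS (e ▸ h.2.2), h.2.1⟩
      refine mem_matS.2 ⟨⟨?_, ?_⟩, ?_⟩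
      · intro p hp
        rcases Finset.mem_insert.1 hp with rfl | hp
        · exact hi j hj
        · exact hlt p hp
      · intro p hp q hq hpq
        rcases Finset.mem_insert.1 hp with rfl | hp <;> rcases Finset.mem_insert.1 hq with rfl | hq
        · exact absurd rfl hpq
        · have := hcross q hq
          exact ⟨this.1.symm, this.2.2.1.symm, this.2.1.symm, this.2.2.2.symm⟩
        · have := hcross p hp
          exact ⟨this.1, this.2.1, this.2.2.1, this.2.2.2⟩
        · exact hdis p hp q hq hpq
      · intro p hp
        rcases Finset.mem_insert.1 hp with rfl | hp
        · exact ⟨Finset.mem_insert_self _ _, Finset.mem_insert_of_mem hj⟩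
        · have h := h2 p hp
          exact ⟨Finset.mem_insert_of_mem (Finset.mem_of_mem_erase h.1),
            Finset.mem_insert_of_mem (Finset.mem_of_mem_erase h.2)⟩

lemma notMem_of_matS {S : Finset (Fin N)} {M : Finset (Fin N × Fin N)} (hM : M ∈ matS S)
    {i : Fin N} (hi : i ∉ S) (j : Fin N) : (i, j) ∉ M :=
  fun h => hi ((mem_matS.1 hM).2 _ h).1

lemma matPoly_insert (s : ℝ) (A : Matrix (Fin N) (Fin N) ℝ) {S : Finset (Fin N)} {i : Fin N}
    (hi : ∀ j ∈ S, i < j) :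
    matPoly s A (insert i S)
      = s * matPoly s A S + ∑ j ∈ S, A i j ^ 2 * matPoly s A (S.erase j) := by
  have hiS : i ∉ S := fun h => lt_irrefl _ (hi i h)
  have hiE : ∀ j, i ∉ S.erase j := fun j h => hiS (Finset.mem_of_mem_erase h)
  unfold matPoly
  rw [matS_insert hi, Finset.sum_union, Finset.sum_biUnion]
  · congr 1
    · rw [Finset.mul_sum]
      refine Finset.sum_congr rfl fun M hM => ?_
      have := two_mul_card_le hM
      rw [Finset.card_insert_of_notMem hiS,
        show S.card + 1 - 2 * M.card = (S.card - 2 * M.card) + 1 by omega, pow_succ]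
      ring
    · refine Finset.sum_congr rfl fun j hj => ?_
      rw [Finset.sum_image, Finset.mul_sum]
      · refine Finset.sum_congr rfl fun M hM => ?_
        have hn := notMem_of_matS hM (hiE j) j
        rw [Finset.prod_insert hn, Finset.card_insert_of_notMem hn,
          Finset.card_insert_of_notMem hiS, Finset.card_erase_of_mem hj,
          show S.card + 1 - 2 * (M.card + 1) = S.card - 1 - 2 * M.card by omega, mul_assoc]
      · intro M hM M' hM' h
        rw [← Finset.erase_insert (notMem_of_matS hM (hiE j) j), h,
          Finset.erase_insert (notMem_of_matS hM' (hiE j) j)]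
  · intro j hj k hk hjk
    simp only [Function.onFun]
    rw [Finset.disjoint_left]
    rintro M h1 h2
    obtain ⟨M1, hM1, rfl⟩ := Finset.mem_image.1 h1
    obtain ⟨M2, hM2, h⟩ := Finset.mem_image.1 h2
    have : (i, j) ∈ insert (i, k) M2 := h ▸ Finset.mem_insert_self _ _
    rcases Finset.mem_insert.1 this with h' | h'
    · exact hjk (Prod.ext_iff.1 h').2
    · exact notMem_of_matS hM2 (hiE k) j h'
  · rw [Finset.disjoint_left]
    intro M h1 h2
    obtain ⟨j, _, h2⟩ := Finset.mem_biUnion.1 h2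
    obtain ⟨M2, _, rfl⟩ := Finset.mem_image.1 h2
    exact notMem_of_matS h1 hiS j (Finset.mem_insert_self _ _)

lemma matPoly_empty (s : ℝ) (A : Matrix (Fin N) (Fin N) ℝ) : matPoly s A ∅ = 1 := by
  have : matS (∅ : Finset (Fin N)) = {∅} := by
    ext M
    rw [mem_matS, Finset.mem_singleton]
    constructor
    · rintro ⟨_, h⟩
      exact Finset.eq_empty_of_forall_notMem fun p hp => by simpa using h p hp
    · rintro rfl; simp [IsMat]
  simp [matPoly, this]

lemma matPoly_nonneg {s : ℝ} (hs : 0 ≤ s) (A : Matrix (Fin N) (Fin N) ℝ) (S : Finset (Fin N)) :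
    0 ≤ matPoly s A S :=
  Finset.sum_nonneg fun _ _ => mul_nonneg (Finset.prod_nonneg fun _ _ => sq_nonneg _)
    (pow_nonneg hs _)

lemma PhiFull_eq_matPoly (A : Matrix (Fin N) (Fin N) ℝ) {t : ℝ} (ht : 0 ≤ t) :
    PhiFull A t = matPoly (√t) A Finset.univ := by
  have hfib : matPoly (√t) A Finset.univ = ∑ k ∈ Finset.range (N / 2 + 1),
      ∑ M ∈ (matS (Finset.univ : Finset (Fin N))).filter (fun M => M.card = k),
        (∏ p ∈ M, (A p.1 p.2) ^ 2) * (√t) ^ ((Finset.univ : Finset (Fin N)).card - 2 * M.card) := by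
    unfold matPoly
    rw [Finset.sum_fiberwise_of_maps_to]
    intro M hM
    have := two_mul_card_le hM
    rw [Finset.card_univ, Fintype.card_fin] at this
    rw [Finset.mem_range]; omega
  rw [hfib, PhiFull, PhiW, Finset.mul_sum]
  refine Finset.sum_congr rfl fun k hk => ?_
  have hk' : k ≤ N / 2 := by rw [Finset.mem_range] at hk; omega
  have hpow : (√t) ^ (N - 2 * k) = (if Even N then 1 else √t) * t ^ (N / 2 - k) := by
    have hsq : t ^ (N / 2 - k) = (√t) ^ (2 * (N / 2 - k)) := by
      rw [pow_mul, Real.sq_sqrt ht]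
    rw [hsq]
    split_ifs with h
    · obtain ⟨m, rfl⟩ := h
      rw [one_mul]; congr 1; omega
    · obtain ⟨m, rfl⟩ := Nat.not_even_iff_odd.1 h
      rw [← pow_succ']; congr 1; omega
  rw [phiW, mul_left_comm, ← hpow, Finset.sum_mul]
  refine Finset.sum_congr ?_ fun M hM => ?_
  · ext M
    simp [mem_matS, IsMat]
  · have : M.card = k := by
      simp only [Finset.mem_filter] at hM; exact hM.2
    rw [this, Finset.card_univ, Fintype.card_fin]

end Matchings

/-! ### Induction over the rows -/

section MainInduction

variable {N : ℕ}

lemma sampleY_skew {A : Matrix (Fin N) (Fin N) ℝ} (hA : Aᵀ = -A) (ξ : PairIdx N → ℝ) :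
    (sampleY A ξ)ᵀ = -sampleY A ξ := by
  have hA' : ∀ i j, A j i = - A i j := fun i j => by
    have := congrFun (congrFun hA i) j
    simpa using this
  ext i j
  rcases lt_trichotomy i j with h | h | h
  · simp [sampleY, h, h.not_gt, hA' i j]
  · subst h; simp [sampleY]
  · simp [sampleY, h, h.not_gt, hA' i j]

/-- The principal minor of `s • 1 + Y_A(ξ)` on the index set `S`. -/
noncomputable def minorD (s : ℝ) (A : Matrix (Fin N) (Fin N) ℝ) (S : Finset (Fin N))
    (ξ : PairIdx N → ℝ) : ℝ := (cutM s (sampleY A ξ) S).det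

lemma measurable_minorD (s : ℝ) (A : Matrix (Fin N) (Fin N) ℝ) (S : Finset (Fin N)) :
    Measurable (minorD s A S) := by
  have hY : ∀ i j, Continuous fun ξ : PairIdx N → ℝ => sampleY A ξ i j := by
    intro i j
    simp only [sampleY, of_apply]
    split_ifs <;> fun_prop
  refine Continuous.measurable (Continuous.matrix_det (continuous_matrix fun i j => ?_))
  simp only [cutM, of_apply, Matrix.add_apply]
  split_ifs
  · exact continuous_const.add (hY i j)
  · exact continuous_const
  · exact continuous_const

/-- The coordinates `ξ_{ij}`, `j > i`, of row `i`. -/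
def rowIdx (i : Fin N) : Finset (PairIdx N) := Finset.univ.filter fun p => p.1.1 = i

lemma sampleY_update_of_ne (A : Matrix (Fin N) (Fin N) ℝ) (ξ : PairIdx N → ℝ) {i : Fin N}
    (y : rowIdx i → ℝ) {a b : Fin N} (ha : a ≠ i) (hb : b ≠ i) :
    sampleY A (Function.updateFinset ξ (rowIdx i) y) a b = sampleY A ξ a b := by
  simp [sampleY, Function.updateFinset, rowIdx, ha, hb]

lemma cutM_update (s : ℝ) (A : Matrix (Fin N) (Fin N) ℝ) (ξ : PairIdx N → ℝ) {i : Fin N}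
    (y : rowIdx i → ℝ) {S : Finset (Fin N)} (hi : i ∉ S) :
    cutM s (sampleY A (Function.updateFinset ξ (rowIdx i) y)) S = cutM s (sampleY A ξ) S := by
  ext a b
  by_cases h : a ∈ S ∧ b ∈ S
  · have ha : a ≠ i := fun e => hi (e ▸ h.1)
    have hb : b ≠ i := fun e => hi (e ▸ h.2)
    simp [cutM, h, sampleY_update_of_ne A ξ y ha hb]
  · simp [cutM, h]

lemma minorD_update (s : ℝ) (A : Matrix (Fin N) (Fin N) ℝ) (ξ : PairIdx N → ℝ) {i : Fin N}
    (y : rowIdx i → ℝ) {S : Finset (Fin N)} (hi : i ∉ S) :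
    minorD s A S (Function.updateFinset ξ (rowIdx i) y) = minorD s A S ξ := by
  rw [minorD, cutM_update s A ξ y hi, minorD]

/-- The matrix sending the Gaussian coordinates of row `i` to row `i` of `Y_A`, cut to `S`. -/
noncomputable def rowT (A : Matrix (Fin N) (Fin N) ℝ) (S : Finset (Fin N)) (i : Fin N) :
    Matrix (Fin N) (rowIdx i) ℝ :=
  Matrix.of fun j p => if p.1.1.2 = j then (if j ∈ S then A i j else 0) else 0

lemma sum_rowIdx {i j : Fin N} (hij : i < j) (f : rowIdx i → ℝ) :
    ∑ p : rowIdx i, (if p.1.1.2 = j then f p else 0) = f ⟨⟨(i, j), hij⟩, by simp [rowIdx]⟩ := by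
  rw [Finset.sum_eq_single ⟨⟨(i, j), hij⟩, by simp [rowIdx]⟩]
  · simp
  · rintro ⟨⟨⟨a, b⟩, hab⟩, hp⟩ _ hne
    have ha : a = i := by simpa [rowIdx] using hp
    subst ha
    rw [if_neg]
    rintro rfl
    exact hne rfl
  · simp

lemma rowCut_update (A : Matrix (Fin N) (Fin N) ℝ) (ξ : PairIdx N → ℝ) {i : Fin N}
    (y : rowIdx i → ℝ) {S : Finset (Fin N)} (hi : ∀ j ∈ S, i < j) :
    rowCut (sampleY A (Function.updateFinset ξ (rowIdx i) y)) S i = rowT A S i *ᵥ y := by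
  ext j
  by_cases hj : j ∈ S
  · have hij := hi j hj
    simp only [rowCut, hj, if_true, rowT, mulVec, dotProduct, of_apply, ite_mul, zero_mul]
    rw [sum_rowIdx hij (fun p => A i j * y p)]
    simp [sampleY, hij, Function.updateFinset, rowIdx]
  · simp [rowCut, hj, rowT, mulVec, dotProduct]

lemma rowT_mul_transpose (A : Matrix (Fin N) (Fin N) ℝ) {i : Fin N} {S : Finset (Fin N)}
    (hi : ∀ j ∈ S, i < j) :
    rowT A S i * (rowT A S i)ᵀ = diagonal fun j => if j ∈ S then A i j ^ 2 else 0 := by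
  ext j k
  rw [Matrix.mul_apply]
  by_cases hj : j ∈ S
  · have hij := hi j hj
    simp only [rowT, of_apply, transpose_apply, hj, if_true, ite_mul, zero_mul]
    rw [sum_rowIdx hij]
    by_cases hjk : j = k
    · subst hjk; simp [hj, sq]
    · simp [hjk]
  · by_cases hjk : j = k
    · subst hjk; simp [hj, rowT]
    · simp [hj, rowT, hjk]

/-- The conditional expectation of the minor on `insert i S` given all rows but row `i`. -/
noncomputable def minorG (s : ℝ) (A : Matrix (Fin N) (Fin N) ℝ) (S : Finset (Fin N)) (i : Fin N)
    (ξ : PairIdx N → ℝ) : ℝ :=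
  s * minorD s A S ξ + ∑ j ∈ S, A i j ^ 2 * minorD s A (S.erase j) ξ

lemma measurable_minorG (s : ℝ) (A : Matrix (Fin N) (Fin N) ℝ) (S : Finset (Fin N)) (i : Fin N) :
    Measurable (minorG s A S i) :=
  ((measurable_minorD s A S).const_mul s).add
    (Finset.measurable_fun_sum _ fun j _ => (measurable_minorD s A (S.erase j)).const_mul _)

lemma minorG_update (s : ℝ) (A : Matrix (Fin N) (Fin N) ℝ) (ξ : PairIdx N → ℝ) {i : Fin N}
    (y : rowIdx i → ℝ) {S : Finset (Fin N)} (hi : i ∉ S) :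
    minorG s A S i (Function.updateFinset ξ (rowIdx i) y) = minorG s A S i ξ := by
  have hE : ∀ j, i ∉ S.erase j := fun j h => hi (Finset.mem_of_mem_erase h)
  simp only [minorG, minorD_update s A ξ y hi, minorD_update s A ξ y (hE _)]

lemma minorD_nonneg {s : ℝ} (hs : 0 ≤ s) {A : Matrix (Fin N) (Fin N) ℝ} (hA : Aᵀ = -A)
    (S : Finset (Fin N)) (ξ : PairIdx N → ℝ) : 0 ≤ minorD s A S ξ :=
  cutM_det_nonneg hs (sampleY_skew hA ξ) S

/-- Conditionally on the other rows, a minor is a constant plus a nonnegative quadratic form in the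
Gaussian coordinates of row `i`, whose mean is `minorG`. -/
lemma row_step {s : ℝ} (hs : 0 ≤ s) {A : Matrix (Fin N) (Fin N) ℝ} (hA : Aᵀ = -A)
    {S : Finset (Fin N)} {i : Fin N} (hi : ∀ j ∈ S, i < j) {F : ℝ} (hF : 0 ≤ F)
    (ξ : PairIdx N → ℝ) :
    ∫⁻ y, convL (minorD s A (insert i S) (Function.updateFinset ξ (rowIdx i) y) / F)
        ∂(stdG (rowIdx i)) ≤ convL (minorG s A S i ξ / F) + ENNReal.ofReal C1 ∧
    ∫⁻ y, ENNReal.ofReal (minorD s A (insert i S) (Function.updateFinset ξ (rowIdx i) y) / F)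
        ∂(stdG (rowIdx i)) = ENNReal.ofReal (minorG s A S i ξ / F) := by
  have hiS : i ∉ S := fun h => lt_irrefl _ (hi i h)
  set T := rowT A S i with hT
  set J := (cutM s (sampleY A ξ) S).adjugate with hJ
  set P : Matrix (rowIdx i) (rowIdx i) ℝ := F⁻¹ • (Tᵀ * J * T) with hP
  have hquad : ∀ y, y ⬝ᵥ (P *ᵥ y) = F⁻¹ * ((T *ᵥ y) ⬝ᵥ (J *ᵥ (T *ᵥ y))) := by
    intro y
    rw [hP, smul_mulVec, dotProduct_smul, smul_eq_mul, ← mulVec_mulVec, ← mulVec_mulVec,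
      dotProduct_mulVec y, vecMul_transpose]
  have hnn : ∀ y, 0 ≤ y ⬝ᵥ (P *ᵥ y) := by
    intro y
    rw [hquad]
    exact mul_nonneg (inv_nonneg.2 hF) (cutM_adj_nonneg hs (sampleY_skew hA ξ) S _)
  have hc : 0 ≤ s * minorD s A S ξ / F := div_nonneg (mul_nonneg hs (minorD_nonneg hs hA S ξ)) hF
  have hD : ∀ y, minorD s A (insert i S) (Function.updateFinset ξ (rowIdx i) y) / F
      = s * minorD s A S ξ / F + y ⬝ᵥ (P *ᵥ y) := by
    intro y
    rw [minorD, cutM_insert_det hs (sampleY_skew hA _) S hiS, rowCut_update A ξ y hi,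
      cutM_update s A ξ y hiS, hquad, add_div, minorD, div_eq_inv_mul (_ ⬝ᵥ _)]
  have htr : s * minorD s A S ξ / F + P.trace = minorG s A S i ξ / F := by
    have h1 : (Tᵀ * J * T).trace = ∑ j ∈ S, A i j ^ 2 * minorD s A (S.erase j) ξ := by
      rw [Matrix.mul_assoc, Matrix.trace_mul_comm, Matrix.mul_assoc, rowT_mul_transpose A hi]
      simp only [Matrix.trace, diag_apply, mul_diagonal]
      rw [← Finset.sum_subset (Finset.subset_univ S) (fun j _ hj => by simp [hj])]
      refine Finset.sum_congr rfl fun j hj => ?_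
      rw [hJ, cutM_adjugate_diag _ _ _ hj, if_pos hj, mul_comm]; rfl
    rw [hP, trace_smul, h1, minorG, add_div, smul_eq_mul, div_eq_inv_mul (∑ j ∈ S, _)]
  have := quad_gaussian hc P hnn
  rw [htr] at this
  simpa only [hD] using this

/-- Integrating out row `i` does not change a function that does not depend on it. -/
lemma lmarginal_of_update {i : Fin N} {g : (PairIdx N → ℝ) → ENNReal}
    (hg : ∀ ξ (y : rowIdx i → ℝ), g (Function.updateFinset ξ (rowIdx i) y) = g ξ) :
    (∫⋯∫⁻_(rowIdx i), g ∂(fun _ : PairIdx N => gaussianReal 0 1)) = g := by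
  ext ξ
  simp [lmarginal, hg]

lemma minorD_convL_step {s : ℝ} (hs : 0 ≤ s) {A : Matrix (Fin N) (Fin N) ℝ} (hA : Aᵀ = -A)
    {S : Finset (Fin N)} {i : Fin N} (hi : ∀ j ∈ S, i < j) {F : ℝ} (hF : 0 ≤ F) :
    ∫⁻ ξ, convL (minorD s A (insert i S) ξ / F) ∂(gaussPi N)
      ≤ ∫⁻ ξ, convL (minorG s A S i ξ / F) ∂(gaussPi N) + ENNReal.ofReal C1 := by
  have hiS : i ∉ S := fun h => lt_irrefl _ (hi i h)
  have hm1 : Measurable fun ξ => convL (minorD s A (insert i S) ξ / F) :=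
    measurable_convL.comp ((measurable_minorD s A _).div_const F)
  have hm2 : Measurable fun ξ => convL (minorG s A S i ξ / F) :=
    measurable_convL.comp ((measurable_minorG s A S i).div_const F)
  have hprob : IsProbabilityMeasure (gaussPi N) := by unfold gaussPi; infer_instance
  have : ∫⁻ ξ, convL (minorG s A S i ξ / F) ∂(gaussPi N) + ENNReal.ofReal C1
      = ∫⁻ ξ, (convL (minorG s A S i ξ / F) + ENNReal.ofReal C1) ∂(gaussPi N) := by
    rw [lintegral_add_left hm2]; simp
  rw [this]
  refine lintegral_le_of_lmarginal_le (rowIdx i) hm1 (hm2.add_const _) ?_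
  rw [lmarginal_of_update (g := fun ξ => convL (minorG s A S i ξ / F) + ENNReal.ofReal C1)
    (fun ξ y => by simp only [minorG_update s A ξ y hiS])]
  exact fun ξ => (row_step hs hA hi hF ξ).1

lemma minorD_mean_step {s : ℝ} (hs : 0 ≤ s) {A : Matrix (Fin N) (Fin N) ℝ} (hA : Aᵀ = -A)
    {S : Finset (Fin N)} {i : Fin N} (hi : ∀ j ∈ S, i < j) :
    ∫⁻ ξ, ENNReal.ofReal (minorD s A (insert i S) ξ) ∂(gaussPi N)
      = ∫⁻ ξ, ENNReal.ofReal (minorG s A S i ξ) ∂(gaussPi N) := by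
  have hiS : i ∉ S := fun h => lt_irrefl _ (hi i h)
  refine lintegral_eq_of_lmarginal_eq (rowIdx i) (measurable_minorD s A _).ennreal_ofReal
    (measurable_minorG s A S i).ennreal_ofReal ?_
  rw [lmarginal_of_update (g := fun ξ => ENNReal.ofReal (minorG s A S i ξ))
    (fun ξ y => by simp only [minorG_update s A ξ y hiS])]
  ext ξ
  have := (row_step hs hA hi zero_le_one ξ).2
  simp only [div_one] at this
  exact this

lemma minorD_empty (s : ℝ) (A : Matrix (Fin N) (Fin N) ℝ) (ξ : PairIdx N → ℝ) :
    minorD s A ∅ ξ = 1 := by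
  have : cutM s (sampleY A ξ) ∅ = 1 := by ext i j; simp [cutM, Matrix.one_apply]
  rw [minorD, this, det_one]

/-- The Gaussian mean of a principal minor is the matching polynomial. -/
lemma minorD_mean {s : ℝ} (hs : 0 ≤ s) {A : Matrix (Fin N) (Fin N) ℝ} (hA : Aᵀ = -A)
    (S : Finset (Fin N)) :
    ∫⁻ ξ, ENNReal.ofReal (minorD s A S ξ) ∂(gaussPi N) = ENNReal.ofReal (matPoly s A S) := by
  have hprob : IsProbabilityMeasure (gaussPi N) := by unfold gaussPi; infer_instance
  induction S using Finset.strongInduction with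
  | H S ih =>
    rcases S.eq_empty_or_nonempty with rfl | hne
    · simp [minorD_empty, matPoly_empty]
    obtain ⟨i, hiS, hmin⟩ : ∃ i ∈ S, ∀ j ∈ S, i ≤ j :=
      ⟨S.min' hne, S.min'_mem hne, fun j hj => S.min'_le j hj⟩
    obtain ⟨S', hS', rfl⟩ : ∃ S', i ∉ S' ∧ insert i S' = S :=
      ⟨S.erase i, Finset.notMem_erase i S, Finset.insert_erase hiS⟩
    have hlt : ∀ j ∈ S', i < j := fun j hj =>
      lt_of_le_of_ne (hmin j (Finset.mem_insert_of_mem hj)) fun e => hS' (e ▸ hj)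
    have hsub : S' ⊂ insert i S' := Finset.ssubset_insert hS'
    have hm := fun V => (measurable_minorD s A V).ennreal_ofReal
    have hnn := fun V ξ => minorD_nonneg hs hA V ξ
    rw [minorD_mean_step hs hA hlt, matPoly_insert s A hlt]
    have hexp : ∀ ξ, ENNReal.ofReal (minorG s A S' i ξ)
        = ENNReal.ofReal s * ENNReal.ofReal (minorD s A S' ξ)
          + ∑ j ∈ S', ENNReal.ofReal (A i j ^ 2) * ENNReal.ofReal (minorD s A (S'.erase j) ξ) := by
      intro ξ
      rw [minorG, ENNReal.ofReal_add (mul_nonneg hs (hnn _ _))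
        (Finset.sum_nonneg fun j _ => mul_nonneg (sq_nonneg _) (hnn _ _)), ENNReal.ofReal_mul hs,
        ENNReal.ofReal_sum_of_nonneg fun j _ => mul_nonneg (sq_nonneg _) (hnn _ _)]
      simp only [ENNReal.ofReal_mul (sq_nonneg _)]
    simp only [hexp]
    rw [lintegral_add_left ((hm S').const_mul _), lintegral_const_mul _ (hm S'), ih S' hsub,
      lintegral_finsetSum _ fun j _ => (hm _).const_mul _,
      ENNReal.ofReal_add (mul_nonneg hs (matPoly_nonneg hs A _))
        (Finset.sum_nonneg fun j _ => mul_nonneg (sq_nonneg _) (matPoly_nonneg hs A _)),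
      ENNReal.ofReal_mul hs,
      ENNReal.ofReal_sum_of_nonneg fun j _ => mul_nonneg (sq_nonneg _) (matPoly_nonneg hs A _)]
    congr 1
    refine Finset.sum_congr rfl fun j hj => ?_
    rw [lintegral_const_mul _ (hm _), ENNReal.ofReal_mul (sq_nonneg _),
      ih _ ((Finset.erase_subset j S').trans_ssubset hsub)]

lemma minorD_ae_zero {s : ℝ} (hs : 0 ≤ s) {A : Matrix (Fin N) (Fin N) ℝ} (hA : Aᵀ = -A)
    {S : Finset (Fin N)} (h0 : matPoly s A S = 0) : ∀ᵐ ξ ∂(gaussPi N), minorD s A S ξ = 0 := by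
  have h := minorD_mean hs hA S
  rw [h0, ENNReal.ofReal_zero, lintegral_eq_zero_iff (measurable_minorD s A S).ennreal_ofReal] at h
  filter_upwards [h] with ξ hξ
  exact le_antisymm (ENNReal.ofReal_eq_zero.1 hξ) (minorD_nonneg hs hA S ξ)

/-- The estimate carried by the induction: every row but the last costs one `C₁`. -/
lemma minorD_convL {s : ℝ} (hs : 0 ≤ s) {A : Matrix (Fin N) (Fin N) ℝ} (hA : Aᵀ = -A)
    (S : Finset (Fin N)) (hpos : 0 < matPoly s A S) :
    ∫⁻ ξ, convL (minorD s A S ξ / matPoly s A S) ∂(gaussPi N)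
      ≤ 1 + (S.card - 1 : ℕ) * ENNReal.ofReal C1 := by
  have hprob : IsProbabilityMeasure (gaussPi N) := by unfold gaussPi; infer_instance
  induction S using Finset.strongInduction with
  | H S ih =>
    rcases S.eq_empty_or_nonempty with rfl | hne
    · simp [minorD_empty, matPoly_empty, convL_one]
    obtain ⟨i, hiS, hmin⟩ : ∃ i ∈ S, ∀ j ∈ S, i ≤ j :=
      ⟨S.min' hne, S.min'_mem hne, fun j hj => S.min'_le j hj⟩
    obtain ⟨S', hS', rfl⟩ : ∃ S', i ∉ S' ∧ insert i S' = S :=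
      ⟨S.erase i, Finset.notMem_erase i S, Finset.insert_erase hiS⟩
    have hlt : ∀ j ∈ S', i < j := fun j hj =>
      lt_of_le_of_ne (hmin j (Finset.mem_insert_of_mem hj)) fun e => hS' (e ▸ hj)
    have hsub : S' ⊂ insert i S' := Finset.ssubset_insert hS'
    rcases S'.eq_empty_or_nonempty with rfl | hne'
    · have hF : matPoly s A (insert i ∅) = s := by
        rw [matPoly_insert s A hlt, matPoly_empty]; simp
      have hD : ∀ ξ, minorD s A (insert i ∅) ξ = s := by
        intro ξ
        have h := cutM_insert_det hs (sampleY_skew hA ξ) ∅ hS'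
        have hr : rowCut (sampleY A ξ) ∅ i = 0 := by ext j; simp [rowCut]
        have hE := minorD_empty s A ξ
        rw [minorD] at hE
        rw [minorD, h, hr, hE]; simp
      rw [hF] at hpos
      simp only [hF, hD, div_self hpos.ne', convL_one]
      simp
    set F := matPoly s A (insert i S') with hF
    refine (minorD_convL_step hs hA hlt hpos.le).trans ?_
    have hcard : (insert i S').card - 1 = (S'.card - 1) + 1 := by
      have := hne'.card_pos
      rw [Finset.card_insert_of_notMem hS']; omega
    rw [hcard, Nat.cast_add, Nat.cast_one, add_mul, one_mul, ← add_assoc]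
    gcongr
    -- the terms of `minorG`, indexed by `none` (vertex `i` unmatched) and `some j` (edge `ij`)
    set V : Option (Fin N) → Finset (Fin N) := fun o => o.elim S' (fun j => S'.erase j) with hV
    set w : Option (Fin N) → ℝ := fun o => o.elim s (fun j => A i j ^ 2) with hw
    set p : Option (Fin N) → ℝ := fun o => w o * matPoly s A (V o) / F with hp
    have hw0 : ∀ o, 0 ≤ w o := by
      rintro (_ | j)
      · exact hs
      · exact sq_nonneg _
    have hVS : ∀ o, V o ⊆ S' := by
      rintro (_ | j)
      · exact subset_rfl
      · exact Finset.erase_subset _ _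
    have hp0 : ∀ o, 0 ≤ p o := fun o =>
      div_nonneg (mul_nonneg (hw0 o) (matPoly_nonneg hs A _)) hpos.le
    have hp1 : ∑ o ∈ S'.insertNone, p o = 1 := by
      rw [Finset.sum_insertNone]
      simp only [hp, hw, hV, Option.elim]
      rw [← Finset.sum_div, ← add_div, ← matPoly_insert s A hlt, ← hF, div_self hpos.ne']
    have hz : ∀ᵐ ξ ∂(gaussPi N), ∀ o, matPoly s A (V o) = 0 → minorD s A (V o) ξ = 0 := by
      rw [ae_all_iff]
      intro o
      by_cases h0 : matPoly s A (V o) = 0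
      · filter_upwards [minorD_ae_zero hs hA h0] with ξ hξ _ using hξ
      · exact Filter.Eventually.of_forall fun ξ h => absurd h h0
    have hmV : ∀ o, Measurable fun ξ => convL (minorD s A (V o) ξ / matPoly s A (V o)) := fun o =>
      measurable_convL.comp ((measurable_minorD s A _).div_const _)
    calc ∫⁻ ξ, convL (minorG s A S' i ξ / F) ∂(gaussPi N)
        ≤ ∫⁻ ξ, ∑ o ∈ S'.insertNone, ENNReal.ofReal (p o)
            * convL (minorD s A (V o) ξ / matPoly s A (V o)) ∂(gaussPi N) := by
          refine lintegral_mono_ae ?_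
          filter_upwards [hz] with ξ hξ
          have hG : minorG s A S' i ξ / F
              = ∑ o ∈ S'.insertNone, p o * (minorD s A (V o) ξ / matPoly s A (V o)) := by
            have hterm : ∀ o, p o * (minorD s A (V o) ξ / matPoly s A (V o))
                = w o * minorD s A (V o) ξ / F := by
              intro o
              by_cases h0 : matPoly s A (V o) = 0
              · simp [h0, hξ o h0]
              · simp only [hp]; field_simp
            simp only [hterm]
            rw [Finset.sum_insertNone]
            simp only [hw, hV, Option.elim, minorG]
            rw [← Finset.sum_div, ← add_div]
          rw [hG]
          exact convL_sum _ p _ (fun o _ => hp0 o) hp1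
      _ = ∑ o ∈ S'.insertNone, ENNReal.ofReal (p o)
            * ∫⁻ ξ, convL (minorD s A (V o) ξ / matPoly s A (V o)) ∂(gaussPi N) := by
          rw [lintegral_finsetSum _ fun o _ => (hmV o).const_mul _]
          exact Finset.sum_congr rfl fun o _ => lintegral_const_mul _ (hmV o)
      _ ≤ ∑ o ∈ S'.insertNone, ENNReal.ofReal (p o)
            * (1 + (S'.card - 1 : ℕ) * ENNReal.ofReal C1) := by
          refine Finset.sum_le_sum fun o _ => ?_
          rcases (matPoly_nonneg hs A (V o)).eq_or_lt with h0 | h0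
          · simp [hp, ← h0]
          · have h1 := ih (V o) ((hVS o).trans_ssubset hsub) h0
            have h2 : (V o).card - 1 ≤ S'.card - 1 :=
              Nat.sub_le_sub_right (Finset.card_le_card (hVS o)) 1
            refine mul_le_mul_right (h1.trans ?_) _
            gcongr
      _ = 1 + (S'.card - 1 : ℕ) * ENNReal.ofReal C1 := by
          rw [← Finset.sum_mul, ← ENNReal.ofReal_sum_of_nonneg fun o _ => hp0 o, hp1]
          simp

end MainInduction

/-- for a nonzero skew-symmetric `A` and `t ≥ 0`,
`log Φ(t,A) ≤ log Φ̃(t,A) + (N-1) C₁`, where for `N` odd `Φ(t,A)` is replaced by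
`√t·Φ(t,A)`. -/
theorem log_matching_polynomial_le_logPhiTilde_add
    {N : ℕ} (A : Matrix (Fin N) (Fin N) ℝ) (hA : Aᵀ = -A) (hA0 : A ≠ 0)
    (t : ℝ) (ht : 0 ≤ t) :
    Real.log (PhiFull A t) ≤ logPhiTilde t A + ((N : ℝ) - 1) * C1 := by
  have hprob : IsProbabilityMeasure (gaussPi N) := by unfold gaussPi; infer_instance
  have hN : 1 ≤ N := by
    rcases Nat.eq_zero_or_pos N with rfl | h
    · exact absurd (Matrix.ext fun i => i.elim0) hA0
    · exact h
  have hN' : (0 : ℝ) ≤ (N : ℝ) - 1 := by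
    have : (1 : ℝ) ≤ N := by exact_mod_cast hN
    linarith
  have hs := Real.sqrt_nonneg t
  have hlog : logPhiTilde t A
      = ∫ ξ, Real.log (minorD (√t) A Finset.univ ξ) ∂(gaussPi N) := by
    have : ∀ ξ, cutM (√t) (sampleY A ξ) Finset.univ
        = √t • (1 : Matrix (Fin N) (Fin N) ℝ) + sampleY A ξ := by
      intro ξ; ext i j; simp [cutM]
    simp only [logPhiTilde, minorD, this]
  rw [hlog, PhiFull_eq_matPoly A ht]
  set F := matPoly (√t) A Finset.univ with hF
  rcases (matPoly_nonneg hs A Finset.univ).eq_or_lt with h0 | hpos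
  -- a vanishing matching polynomial forces a vanishing determinant, and `Real.log 0 = 0`
  · have h1 : ∫ ξ, Real.log (minorD (√t) A Finset.univ ξ) ∂(gaussPi N) = 0 := by
      refine integral_eq_zero_of_ae ?_
      filter_upwards [minorD_ae_zero hs hA h0.symm] with ξ hξ
      simp [hξ]
    rw [h1, hF, ← h0, Real.log_zero, zero_add]
    exact mul_nonneg hN' C1_nonneg
  · have hmean := minorD_mean hs hA (Finset.univ : Finset (Fin N))
    have hnn : 0 ≤ᵐ[gaussPi N] minorD (√t) A Finset.univ :=
      Filter.Eventually.of_forall fun ξ => minorD_nonneg hs hA _ ξ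
    have hInt : Integrable (minorD (√t) A Finset.univ) (gaussPi N) := by
      refine ⟨(measurable_minorD _ A _).aestronglyMeasurable, ?_⟩
      rw [hasFiniteIntegral_iff_ofReal hnn, hmean]
      exact ENNReal.ofReal_lt_top
    have hval : ∫ ξ, minorD (√t) A Finset.univ ξ ∂(gaussPi N) = F := by
      rw [integral_eq_lintegral_of_nonneg_ae hnn hInt.1, hmean, ENNReal.toReal_ofReal hpos.le]
    have hconv := minorD_convL hs hA (Finset.univ : Finset (Fin N)) hpos
    have hK : (1 : ENNReal) + ((Finset.univ : Finset (Fin N)).card - 1 : ℕ) * ENNReal.ofReal C1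
        = ENNReal.ofReal (1 + ((N : ℝ) - 1) * C1) := by
      rw [Finset.card_univ, Fintype.card_fin, ENNReal.ofReal_add zero_le_one
        (mul_nonneg hN' C1_nonneg), ENNReal.ofReal_one, ENNReal.ofReal_mul hN']
      congr 2
      rw [← ENNReal.ofReal_natCast, Nat.cast_sub hN, Nat.cast_one]
    rw [hK] at hconv
    obtain ⟨hp, hli, hle⟩ := convL_extract ((measurable_minorD (√t) A Finset.univ).div_const F)
      (hInt.div_const F) (by have := mul_nonneg hN' C1_nonneg; linarith) hconv
    rw [integral_div, hval, div_self hpos.ne'] at hle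
    have hsplit : ∫ ξ, Real.log (minorD (√t) A Finset.univ ξ) ∂(gaussPi N)
        = ∫ ξ, Real.log (minorD (√t) A Finset.univ ξ / F) ∂(gaussPi N) + Real.log F := by
      have : ∫ ξ, Real.log (minorD (√t) A Finset.univ ξ) ∂(gaussPi N)
          = ∫ ξ, (Real.log (minorD (√t) A Finset.univ ξ / F) + Real.log F) ∂(gaussPi N) := by
        refine integral_congr_ae ?_
        filter_upwards [hp] with ξ hξ
        rw [← Real.log_mul hξ.ne' hpos.ne', div_mul_cancel₀ _ hpos.ne']
      rw [this, integral_add hli (integrable_const _)]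
      simp
    rw [hsplit]
    linarith
end

section
/- Let C ∈ ℝ^{m×n} with m ≤ n, and let A ∈ ℝ^{(m+n)×(m+n)} be the skew-symmetric block matrix A = [[0, C], [−Cᵀ, 0]]. Let μ_1 ≥ … ≥ μ_m ≥ 0 be the eigenvalues of the positive semidefinite matrix C Cᵀ (the squares of the singular values of C). Then for every t ≥ 0, det(√t I_{m+n} + A) = t^{(n−m)/2} ∏_{i=1}^m (t + μ_i). -/
/-!
Write `s = √t`. Multiplying `s I + A` on the right by the block triangular matrix
`[[s, 0], [Cᵀ, s]]` gives the block triangular matrix `[[s² + C Cᵀ, s C], [0, s²]]`, so taking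
determinants and cancelling powers of `s` yields `det (s I + A) = s ^ (n - m) * det (s² + C Cᵀ)`
for `s ≠ 0`. Both sides are continuous in `s`, hence the identity also holds at `s = 0`. The
last determinant is the characteristic polynomial of `C Cᵀ` at `-s²`, up to sign, and so factors
over the eigenvalues.
-/

open Matrix

lemma det_smul_one_add_eq_prod_eigenvalues {m : ℕ} {B : Matrix (Fin m) (Fin m) ℝ}
    (hB : B.IsHermitian) (t : ℝ) :
    (t • (1 : Matrix (Fin m) (Fin m) ℝ) + B).det = ∏ i, (t + hB.eigenvalues i) := by
  have h := congrArg (Polynomial.eval (-t)) hB.charpoly_eq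
  rw [Matrix.eval_charpoly, Polynomial.eval_prod] at h
  have e : Matrix.scalar (Fin m) (-t) - B = -(t • (1 : Matrix (Fin m) (Fin m) ℝ) + B) := by
    rw [Matrix.scalar_apply, ← Matrix.smul_one_eq_diagonal, neg_smul, neg_add, sub_eq_add_neg]
  have e' : ∀ i, Polynomial.eval (-t) (Polynomial.X - Polynomial.C (hB.eigenvalues i : ℝ))
      = -1 * (t + hB.eigenvalues i) := by
    intro i
    simp only [Polynomial.eval_sub, Polynomial.eval_X, Polynomial.eval_C]
    ring
  rw [e, Matrix.det_neg] at h
  simp only [RCLike.ofReal_real_eq_id, id_eq, e', Finset.prod_mul_distrib, Finset.prod_const,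
    Finset.card_univ] at h
  exact mul_left_cancel₀ (pow_ne_zero _ (by norm_num)) h

lemma det_bipartite_block_of_ne_zero {m n : ℕ} (hmn : m ≤ n) (C : Matrix (Fin m) (Fin n) ℝ)
    {s : ℝ} (hs : s ≠ 0) :
    (s • (1 : Matrix (Fin m ⊕ Fin n) (Fin m ⊕ Fin n) ℝ) + Matrix.fromBlocks 0 C (-Cᵀ) 0).det =
      s ^ (n - m) * (s ^ 2 • (1 : Matrix (Fin m) (Fin m) ℝ) + C * Cᵀ).det := by
  have hmul : (s • (1 : Matrix (Fin m ⊕ Fin n) (Fin m ⊕ Fin n) ℝ) +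
      Matrix.fromBlocks 0 C (-Cᵀ) 0) * Matrix.fromBlocks (s • 1) 0 Cᵀ (s • 1) =
      Matrix.fromBlocks (s ^ 2 • 1 + C * Cᵀ) (s • C) 0 (s ^ 2 • 1) := by
    rw [← Matrix.fromBlocks_one, Matrix.fromBlocks_smul, Matrix.fromBlocks_add,
      Matrix.fromBlocks_multiply]
    simp [smul_smul, pow_two]
  have hdet := congrArg Matrix.det hmul
  rw [Matrix.det_mul, Matrix.det_fromBlocks_zero₁₂, Matrix.det_fromBlocks_zero₂₁] at hdet
  simp only [Matrix.det_smul, Matrix.det_one, mul_one, Fintype.card_fin] at hdet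
  obtain ⟨k, rfl⟩ := Nat.exists_eq_add_of_le hmn
  rw [Nat.add_sub_cancel_left]
  refine mul_right_cancel₀ (mul_ne_zero (pow_ne_zero m hs) (pow_ne_zero (m + k) hs)) ?_
  rw [hdet]
  ring

lemma det_bipartite_block {m n : ℕ} (hmn : m ≤ n) (C : Matrix (Fin m) (Fin n) ℝ) (s : ℝ) :
    (s • (1 : Matrix (Fin m ⊕ Fin n) (Fin m ⊕ Fin n) ℝ) + Matrix.fromBlocks 0 C (-Cᵀ) 0).det =
      s ^ (n - m) * (s ^ 2 • (1 : Matrix (Fin m) (Fin m) ℝ) + C * Cᵀ).det := by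
  have h := Continuous.ext_on (dense_compl_singleton (0 : ℝ))
    (f := fun s : ℝ => (s • (1 : Matrix (Fin m ⊕ Fin n) (Fin m ⊕ Fin n) ℝ) +
      Matrix.fromBlocks 0 C (-Cᵀ) 0).det)
    (g := fun s : ℝ => s ^ (n - m) * (s ^ 2 • (1 : Matrix (Fin m) (Fin m) ℝ) + C * Cᵀ).det)
    (by fun_prop) (by fun_prop)
    (fun s hs => det_bipartite_block_of_ne_zero hmn C hs)
  exact congrFun h s

/-- for `C ∈ ℝ^{m×n}` with `m ≤ n` and the skew-symmetric block
matrix `A = [[0, C], [-Cᵀ, 0]]`, with `μ_1, …, μ_m` the eigenvalues of `C Cᵀ`,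
`det(√t I_{m+n} + A) = t^{(n-m)/2} ∏_i (t + μ_i)` for every `t ≥ 0`. -/
theorem det_sqrt_add_bipartite_block
    {m n : ℕ} (hmn : m ≤ n) (C : Matrix (Fin m) (Fin n) ℝ)
    (hH : (C * Cᵀ).IsHermitian) (t : ℝ) (ht : 0 ≤ t) :
    (Real.sqrt t • (1 : Matrix (Fin m ⊕ Fin n) (Fin m ⊕ Fin n) ℝ) +
        Matrix.fromBlocks 0 C (-Cᵀ) 0).det =
      t ^ (((n : ℝ) - (m : ℝ)) / 2) * ∏ i : Fin m, (t + hH.eigenvalues i) := by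
  rw [det_bipartite_block hmn, Real.sq_sqrt ht, det_smul_one_add_eq_prod_eigenvalues hH]
  congr 1
  rw [Real.sqrt_eq_rpow, ← Real.rpow_natCast, ← Real.rpow_mul ht, Nat.cast_sub hmn]
  congr 1
  ring
end
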